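/- In the k-block finite pool-based AL model, let b > 0 and n be a positive integer with |𝒯| ≤ e^{b·n}, let ε ∈ [0,1], and suppose P[ 𝖽_k(W^k,H) > d ] ≤ ε. Then for every γ ≥ 0, ε ≥ P[ j_k(W^k,U^k,H) ≥ b·n + γ ] − e^{−γ}. -/

import Mathlib

open scoped BigOperators

/-! Where the distortion is at most `d`, the tilt is nonpositive, so `j ≥ c` forces
`Q(U|H) / P(U) ≥ exp c`. By Markov's inequality this has probability at most `exp (-c)` times the
mean of the ratio, and that mean is at most `|𝒯|`: weighting by `P(u)` and bounding `P(t|u) ≤ 1`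
leaves `∑ t, ∑ h, P(h|t) ∑ u, Q(u|h) = |𝒯|`. -/

/-- The law of the pair `(W^k, U^k)` of blocks with i.i.d. components, as a mass function. -/
def blockLaw {α β ι : Type*} [Fintype ι] (pW : α → ℝ) (pU : α → β → ℝ) (w : ι → α) (u : ι → β) :
    ℝ :=
  ∏ i, pW (w i) * pU (w i) (u i)

/-- The joint law of a Markov chain `W → U → T → H`, as a mass function built from the law `p` of
`(W, U)`, the selection kernel `pT` and the learning kernel `pH`. -/
def chainLaw {α β τ η : Type*} (p : α → β → ℝ) (pT : β → τ → ℝ) (pH : τ → η → ℝ)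
    (x : α × β × τ × η) : ℝ :=
  p x.1 x.2.1 * pT x.2.1 x.2.2.1 * pH x.2.2.1 x.2.2.2

/-- The likelihood ratio `Q(u|h) / P_U(u)`, where `P_U` is the second marginal of `p`. It is `0`
where `P_U` vanishes, a set that `chainLaw p` does not charge. -/
noncomputable def likelihoodRatio {α β η : Type*} [Fintype α] (p : α → β → ℝ) (Q : η → β → ℝ)
    (u : β) (h : η) : ℝ :=
  Q h u / ∑ a, p a u

/-- The tilted information `log (Q(u|h) / P_U(u)) + s * (δ(w, h) - d)` with slope `s`; for blocks of
length `k` the slope is `λ * k`. -/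
noncomputable def tiltedInfo {α β η : Type*} [Fintype α] (p : α → β → ℝ) (Q : η → β → ℝ)
    (δ : α → η → ℝ) (d s : ℝ) (w : α) (u : β) (h : η) : ℝ :=
  Real.log (likelihoodRatio p Q u h) + s * (δ w h - d)

section FiniteSums

variable {ι : Type*} {s : Finset ι} {μ : ι → ℝ}

theorem sum_filter_le_sum_filter_add_sum_filter {A B C : ι → Prop} [DecidablePred A]
    [DecidablePred B] [DecidablePred C] (hμ : ∀ x ∈ s, 0 ≤ μ x)
    (hABC : ∀ x ∈ s, A x → B x ∨ C x) :
    ∑ x ∈ s with A x, μ x ≤ ∑ x ∈ s with B x, μ x + ∑ x ∈ s with C x, μ x := by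
  simp only [Finset.sum_filter, ← Finset.sum_add_distrib]
  refine Finset.sum_le_sum fun x hx => ?_
  have hx_nonneg := hμ x hx
  have hx_cover := hABC x hx
  split_ifs <;> first | linarith | tauto

theorem sum_filter_le_log_le_exp_neg_mul_sum {r : ι → ℝ} {c : ℝ} (hc : 0 < c)
    (hr : ∀ x ∈ s, 0 ≤ r x) (hμ : ∀ x ∈ s, 0 ≤ μ x) :
    ∑ x ∈ s with c ≤ Real.log (r x), μ x ≤ Real.exp (-c) * ∑ x ∈ s, r x * μ x := by
  rw [Finset.sum_filter, Finset.mul_sum]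
  refine Finset.sum_le_sum fun x hx => ?_
  have hrμ : 0 ≤ r x * μ x := mul_nonneg (hr x hx) (hμ x hx)
  split_ifs with hlog
  · -- Positivity of `c` excludes the junk value `log 0 = 0`.
    have hr_ne : r x ≠ 0 := by
      intro h
      rw [h, Real.log_zero] at hlog
      exact hc.not_ge hlog
    have hexp : Real.exp c ≤ r x :=
      (Real.le_log_iff_exp_le ((hr x hx).lt_of_ne' hr_ne)).mp hlog
    calc μ x = Real.exp (-c) * (Real.exp c * μ x) := by
          rw [← mul_assoc, ← Real.exp_add, neg_add_cancel, Real.exp_zero, one_mul]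
      _ ≤ Real.exp (-c) * (r x * μ x) := by
          gcongr
          exact hμ x hx
  · positivity

end FiniteSums

theorem blockLaw_nonneg {α β ι : Type*} [Fintype ι] {pW : α → ℝ} {pU : α → β → ℝ}
    (hW : ∀ w, 0 ≤ pW w) (hU : ∀ w u, 0 ≤ pU w u) (w : ι → α) (u : ι → β) :
    0 ≤ blockLaw pW pU w u :=
  Finset.prod_nonneg fun _ _ => mul_nonneg (hW _) (hU _ _)

section ChainLaw

variable {α β τ η : Type*} {p : α → β → ℝ} {pT : β → τ → ℝ} {pH : τ → η → ℝ} {Q : η → β → ℝ}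

theorem chainLaw_nonneg (hp : ∀ a u, 0 ≤ p a u) (hT : ∀ u t, 0 ≤ pT u t)
    (hH : ∀ t h, 0 ≤ pH t h) (x : α × β × τ × η) : 0 ≤ chainLaw p pT pH x :=
  mul_nonneg (mul_nonneg (hp _ _) (hT _ _)) (hH _ _)

theorem sum_mul_chainLaw [Fintype α] [Fintype β] [Fintype τ] [Fintype η] (f : β → η → ℝ) :
    ∑ x, f x.2.1 x.2.2.2 * chainLaw p pT pH x =
      ∑ t, ∑ h, ∑ u, f u h * (∑ a, p a u) * pT u t * pH t h := by
  calc ∑ x, f x.2.1 x.2.2.2 * chainLaw p pT pH x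
      = ∑ y : β × τ × η, f y.1 y.2.2 * (∑ a, p a y.1) * pT y.1 y.2.1 * pH y.2.1 y.2.2 := by
        rw [Fintype.sum_prod_type_right]
        simp only [chainLaw, Finset.mul_sum, Finset.sum_mul, mul_assoc]
    _ = ∑ t, ∑ h, ∑ u, f u h * (∑ a, p a u) * pT u t * pH t h := by
        rw [Fintype.sum_prod_type_right, Fintype.sum_prod_type]

variable [Fintype α]

theorem likelihoodRatio_nonneg (hp : ∀ a u, 0 ≤ p a u) (hQ : ∀ h u, 0 ≤ Q h u) (u : β) (h : η) :
    0 ≤ likelihoodRatio p Q u h :=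
  div_nonneg (hQ h u) (Finset.sum_nonneg fun a _ => hp a u)

theorem likelihoodRatio_mul_marginal_le (hp : ∀ a u, 0 ≤ p a u) (hQ : ∀ h u, 0 ≤ Q h u)
    (u : β) (h : η) : likelihoodRatio p Q u h * ∑ a, p a u ≤ Q h u :=
  mul_le_of_le_div₀ (hQ h u) (Finset.sum_nonneg fun a _ => hp a u) le_rfl

theorem sum_likelihoodRatio_mul_chainLaw_le_card [Fintype β] [Fintype τ] [Fintype η]
    (hp : ∀ a u, 0 ≤ p a u) (hT0 : ∀ u t, 0 ≤ pT u t) (hT1 : ∀ u, ∑ t, pT u t = 1)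
    (hH0 : ∀ t h, 0 ≤ pH t h) (hH1 : ∀ t, ∑ h, pH t h = 1)
    (hQ0 : ∀ h u, 0 ≤ Q h u) (hQ1 : ∀ h, ∑ u, Q h u = 1) :
    ∑ x, likelihoodRatio p Q x.2.1 x.2.2.2 * chainLaw p pT pH x ≤ Fintype.card τ := by
  have hT_le_one (u : β) (t : τ) : pT u t ≤ 1 :=
    hT1 u ▸ Finset.single_le_sum (fun t _ => hT0 u t) (Finset.mem_univ t)
  have hterm (u : β) (t : τ) (h : η) :
      likelihoodRatio p Q u h * (∑ a, p a u) * pT u t ≤ Q h u :=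
    (mul_le_mul (likelihoodRatio_mul_marginal_le hp hQ0 u h) (hT_le_one u t) (hT0 u t)
      (hQ0 h u)).trans_eq (mul_one _)
  calc ∑ x, likelihoodRatio p Q x.2.1 x.2.2.2 * chainLaw p pT pH x
      = ∑ t, ∑ h, ∑ u, likelihoodRatio p Q u h * (∑ a, p a u) * pT u t * pH t h :=
        sum_mul_chainLaw _
    _ ≤ ∑ t, ∑ h, ∑ u, Q h u * pH t h := by
        gcongr with t _ h _ u _
        · exact hH0 t h
        · exact hterm u t h
    _ = Fintype.card τ := by
        simp [← Finset.sum_mul, hQ1, hH1]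

theorem lt_or_le_log_likelihoodRatio_of_le_tiltedInfo {δ : α → η → ℝ} {c d s : ℝ} (hs : 0 ≤ s)
    {w : α} {u : β} {h : η} (hj : c ≤ tiltedInfo p Q δ d s w u h) :
    d < δ w h ∨ c ≤ Real.log (likelihoodRatio p Q u h) := by
  refine (lt_or_ge d (δ w h)).imp_right fun hδ => ?_
  have htilt : s * (δ w h - d) ≤ 0 := mul_nonpos_of_nonneg_of_nonpos hs (sub_nonpos.mpr hδ)
  exact hj.trans (add_le_of_nonpos_right htilt)

end ChainLaw

theorem excess_distortion_converse_block_general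
    {α β τ η : Type*} [Fintype α] [Fintype β] [Fintype τ] [Fintype η]
    {p : α → β → ℝ} (hp : ∀ a u, 0 ≤ p a u)
    {pT : β → τ → ℝ} (hT0 : ∀ u t, 0 ≤ pT u t) (hT1 : ∀ u, ∑ t, pT u t = 1)
    {pH : τ → η → ℝ} (hH0 : ∀ t h, 0 ≤ pH t h) (hH1 : ∀ t, ∑ h, pH t h = 1)
    {Q : η → β → ℝ} (hQ0 : ∀ h u, 0 ≤ Q h u) (hQ1 : ∀ h, ∑ u, Q h u = 1)
    {δ : α → η → ℝ} {d s R ε γ : ℝ} (hs : 0 ≤ s)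
    (hcard : (Fintype.card τ : ℝ) ≤ Real.exp R)
    (hexcess : ∑ x with d < δ x.1 x.2.2.2, chainLaw p pT pH x ≤ ε) (hRγ : 0 < R + γ) :
    (∑ x with R + γ ≤ tiltedInfo p Q δ d s x.1 x.2.1 x.2.2.2, chainLaw p pT pH x)
      - Real.exp (-γ) ≤ ε := by
  have hlaw : ∀ x ∈ Finset.univ, 0 ≤ chainLaw p pT pH x :=
    fun x _ => chainLaw_nonneg hp hT0 hH0 x
  have hratio : ∑ x with R + γ ≤ Real.log (likelihoodRatio p Q x.2.1 x.2.2.2), chainLaw p pT pH x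
      ≤ Real.exp (-γ) :=
    calc _ ≤ Real.exp (-(R + γ)) *
            ∑ x, likelihoodRatio p Q x.2.1 x.2.2.2 * chainLaw p pT pH x :=
          sum_filter_le_log_le_exp_neg_mul_sum hRγ
            (fun _ _ => likelihoodRatio_nonneg hp hQ0 _ _) hlaw
      _ ≤ Real.exp (-(R + γ)) * Real.exp R := by
          gcongr
          exact (sum_likelihoodRatio_mul_chainLaw_le_card hp hT0 hT1 hH0 hH1 hQ0 hQ1).trans hcard
      _ = Real.exp (-γ) := by
          rw [← Real.exp_add]
          congr 1
          ring
  rw [sub_le_iff_le_add]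
  exact (sum_filter_le_sum_filter_add_sum_filter hlaw fun _ _ =>
    lt_or_le_log_likelihoodRatio_of_le_tiltedInfo hs).trans (add_le_add hexcess hratio)

/-- **Converse bound on the excess-distortion probability in the `k`-block finite
pool-based AL model.**

`k`-block model: `W^k = (W_1,…,W_k)` i.i.d. with pmf `PW`; given `W^k` the pools
`U^k = (U_1,…,U_k)` are conditionally independent with `U_i ∼ PU (W_i)`; a data
selection kernel `PT` from `𝒰^k` to `𝒯` and a learning kernel `PH` from `𝒯` to `ℋ`,
so the joint law of `(W^k,U^k,T,H)` is
`(∏ i, PW (w i) * PU (w i) (u i)) * PT u t * PH t h`.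
Block distortion `dst_k (w,h) = (1/k) ∑ i, dst (w i) h`; block tilted information
`j_k(w,u,h) = log (Qk h u / P_{U^k} u) + lam * k * (dst_k (w,h) - d)` for a kernel
`Qk : ℋ → 𝒰^k` and `lam ≥ 0`, where `P_{U^k} u = ∑ w, ∏ i, PW (w i) * PU (w i) (u i)`.

If `|𝒯| ≤ exp (b*n)` and `P[dst_k (W^k,H) > d] ≤ ε`, then for every `γ ≥ 0`,
`ε ≥ P[ j_k(W^k,U^k,H) ≥ b*n + γ ] - exp (-γ)`. -/
theorem excess_distortion_converse_block
    {𝒲 𝒰 𝒯 ℋ : Type*} [Fintype 𝒲] [Nonempty 𝒲] [Fintype 𝒰] [Nonempty 𝒰]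
    [Fintype 𝒯] [Nonempty 𝒯] [Fintype ℋ] [Nonempty ℋ]
    (k : ℕ) (hk : 0 < k)
    (PW : 𝒲 → ℝ) (hPW0 : ∀ w, 0 ≤ PW w) (hPW1 : ∑ w, PW w = 1)
    (PU : 𝒲 → 𝒰 → ℝ) (hPU0 : ∀ w u, 0 ≤ PU w u) (hPU1 : ∀ w, ∑ u, PU w u = 1)
    (PT : (Fin k → 𝒰) → 𝒯 → ℝ) (hPT0 : ∀ u t, 0 ≤ PT u t) (hPT1 : ∀ u, ∑ t, PT u t = 1)
    (PH : 𝒯 → ℋ → ℝ) (hPH0 : ∀ t h, 0 ≤ PH t h) (hPH1 : ∀ t, ∑ h, PH t h = 1)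
    (dst : 𝒲 → ℋ → ℝ) (hdst : ∀ w h, 0 ≤ dst w h) (d : ℝ) (hd : 0 ≤ d)
    (lam : ℝ) (hlam : 0 ≤ lam)
    (Qk : ℋ → (Fin k → 𝒰) → ℝ) (hQ0 : ∀ h u, 0 ≤ Qk h u) (hQ1 : ∀ h, ∑ u, Qk h u = 1)
    (b : ℝ) (hb : 0 < b) (n : ℕ) (hn : 0 < n)
    (hcard : (Fintype.card 𝒯 : ℝ) ≤ Real.exp (b * n))
    (ε : ℝ) (hε0 : 0 ≤ ε) (hε1 : ε ≤ 1)
    (hexcess : (∑ w : Fin k → 𝒲, ∑ u : Fin k → 𝒰, ∑ t, ∑ h,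
        if d < (1 / (k : ℝ)) * ∑ i, dst (w i) h
        then (∏ i, PW (w i) * PU (w i) (u i)) * PT u t * PH t h else 0) ≤ ε) :
    ∀ γ : ℝ, 0 ≤ γ →
      (∑ w : Fin k → 𝒲, ∑ u : Fin k → 𝒰, ∑ t, ∑ h,
        if b * n + γ ≤
            Real.log (Qk h u / ∑ w' : Fin k → 𝒲, ∏ i, PW (w' i) * PU (w' i) (u i))
              + lam * k * ((1 / (k : ℝ)) * (∑ i, dst (w i) h) - d)
        then (∏ i, PW (w i) * PU (w i) (u i)) * PT u t * PH t h else 0)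
        - Real.exp (-γ) ≤ ε := by
  intro γ hγ
  have h := excess_distortion_converse_block_general (blockLaw_nonneg hPW0 hPU0) hPT0 hPT1 hPH0
    hPH1 hQ0 hQ1 (δ := fun w h => (1 / (k : ℝ)) * ∑ i, dst (w i) h) (d := d) (s := lam * k)
    (ε := ε) (γ := γ) (by positivity) hcard
  simp only [Finset.sum_filter, Fintype.sum_prod_type] at h
  exact h hexcess (by positivity)
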